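/- arXiv:1803.09687 — 3 statements merged into one kernel-verified Lean document; each statement's English description precedes it below -/
import Mathlib

section
/- For every K ∈ ℝ, N ∈ (1,∞) and ε > 0 there exists a constant C_ε > 0, depending only on K, N and ε, with the following property: for every interval (a,b) with 2ε ≤ b − a ≤ 1/ε (and, if K > 0, with b − a ≤ π·√((N−1)/K)) and every MCP(K,N) density h on (a,b), one has h(x₁) ≤ C_ε·h(x₀) for all x₀, x₁ ∈ [a + ε, b − ε]. -/
open Real MeasureTheory ENNReal

/-- The finite part of the distortion coefficient `σ_{K,N}^{(t)}(θ)`. -/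
noncomputable def sigmaR (K N t θ : ℝ) : ℝ :=
  if 0 < K * θ ^ 2 then
    Real.sin (t * θ * Real.sqrt (K / N)) / Real.sin (θ * Real.sqrt (K / N))
  else if K * θ ^ 2 = 0 ∨ N = 0 then t
  else Real.sinh (t * θ * Real.sqrt (-K / N)) / Real.sinh (θ * Real.sqrt (-K / N))

/-- The distortion coefficient `σ_{K,N}^{(t)}(θ)`, with value `+∞` when `K·θ² ≥ N·π²`. -/
noncomputable def sigmaE (K N t θ : ℝ) : ℝ≥0∞ :=
  if N * Real.pi ^ 2 ≤ K * θ ^ 2 then ⊤ else ENNReal.ofReal (sigmaR K N t θ)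

/-- `h` is an `MCP(K,N)` density on the interval `I ⊆ ℝ`:  `h` is nonnegative on `I` and
`h(t·x₁ + (1−t)·x₀) ≥ (σ_{K,N−1}^{(1−t)}(|x₁ − x₀|))^{N−1} · h(x₀)` for all `x₀, x₁ ∈ I`,
`t ∈ [0,1]`.  The inequality is formulated in `ℝ≥0∞` so that an infinite coefficient forces
`h(x₀) = 0`. -/
def IsMCPDensity (K N : ℝ) (I : Set ℝ) (h : ℝ → ℝ) : Prop :=
  (∀ x ∈ I, 0 ≤ h x) ∧
  ∀ x₀ ∈ I, ∀ x₁ ∈ I, ∀ t ∈ Set.Icc (0:ℝ) 1,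
    sigmaE K (N - 1) (1 - t) |x₁ - x₀| ^ (N - 1) * ENNReal.ofReal (h x₀)
      ≤ ENNReal.ofReal (h (t * x₁ + (1 - t) * x₀))

/-- The function `s_κ`. -/
noncomputable def sk (κ θ : ℝ) : ℝ :=
  if 0 < κ then Real.sin (Real.sqrt κ * θ) / Real.sqrt κ
  else if κ = 0 then θ
  else Real.sinh (Real.sqrt (-κ) * θ) / Real.sqrt (-κ)

/-- The derivative `s′_κ` of `s_κ`. -/
noncomputable def sk' (κ θ : ℝ) : ℝ :=
  if 0 < κ then Real.cos (Real.sqrt κ * θ)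
  else if κ = 0 then 1
  else Real.cosh (Real.sqrt (-κ) * θ)

/-!
Suppose `[x₀ - ε, x₀ + ε] ⊆ I` and `x₁ ∈ I`. Extend the segment from `x₁` to `x₀` by `ε` beyond
`x₀`, to a point `y ∈ I` at distance `θ = |x₁ - x₀| + ε` from `x₁`. Moving from `x₁` towards `y`,
one meets `x₀` at the time `t` with `(1 - t) θ = ε`, so `h x₀ ≥ σ ^ (N - 1) * h x₁` where `σ` is
either `+∞` or `s_κ(ε) / s_κ(θ)` with `κ = K / (N - 1)`. In the latter case the numerator does not
depend on the points, and the denominator is bounded above as long as `θ` is.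
-/

section sk

variable {κ θ : ℝ}

lemma sk_pos (hθ : 0 < θ) (hκθ : κ * θ ^ 2 < π ^ 2) : 0 < sk κ θ := by
  rcases lt_trichotomy κ 0 with hκ | rfl | hκ
  · have hsqrt : 0 < √(-κ) := sqrt_pos.2 (neg_pos.2 hκ)
    rw [sk, if_neg hκ.not_gt, if_neg hκ.ne]
    exact div_pos (sinh_pos_iff.2 (mul_pos hsqrt hθ)) hsqrt
  · simpa [sk] using hθ
  · have hsqrt : 0 < √κ := sqrt_pos.2 hκ
    have hlt_pi : √κ * θ < π := by
      refine lt_of_pow_lt_pow_left₀ 2 pi_pos.le ?_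
      rwa [mul_pow, sq_sqrt hκ.le]
    rw [sk, if_pos hκ]
    exact div_pos (sin_pos_of_pos_of_lt_pi (mul_pos hsqrt hθ) hlt_pi) hsqrt

lemma continuous_sk (κ : ℝ) : Continuous (sk κ) := by
  unfold sk
  split_ifs <;> fun_prop

lemma exists_sk_le (κ L : ℝ) : ∃ B > 0, ∀ θ ∈ Set.Icc 0 L, sk κ θ ≤ B := by
  obtain ⟨B, hB⟩ := isCompact_Icc.bddAbove_image (continuous_sk κ).continuousOn
  exact ⟨max B 1, by positivity, fun θ hθ => le_max_of_le_left (hB ⟨θ, hθ, rfl⟩)⟩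

end sk

section DistortionCoefficient

variable {K N θ : ℝ}

lemma sigmaR_eq_sk_div_sk (hN : 0 < N) (hθ : θ ≠ 0) (t : ℝ) :
    sigmaR K N t θ = sk (K / N) (t * θ) / sk (K / N) θ := by
  have hθ_sq : 0 < θ ^ 2 := by positivity
  rcases lt_trichotomy K 0 with hK | rfl | hK
  · have hKN : K / N < 0 := div_neg_of_neg_of_pos hK hN
    have hsqrt : √(-(K / N)) ≠ 0 := (sqrt_pos.2 (neg_pos.2 hKN)).ne'
    have hKθ : K * θ ^ 2 < 0 := mul_neg_of_neg_of_pos hK hθ_sq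
    have hdegenerate : ¬(K * θ ^ 2 = 0 ∨ N = 0) := not_or.2 ⟨hKθ.ne, hN.ne'⟩
    simp only [sigmaR, sk, if_neg hKθ.not_gt, if_neg hdegenerate, if_neg hKN.not_gt,
      if_neg hKN.ne, neg_div, div_div_div_cancel_right₀ hsqrt, mul_comm √(-(K / N))]
  · simp [sigmaR, sk, hθ]
  · have hKN : 0 < K / N := div_pos hK hN
    have hsqrt : √(K / N) ≠ 0 := (sqrt_pos.2 hKN).ne'
    simp only [sigmaR, sk, if_pos (mul_pos hK hθ_sq), if_pos hKN,
      div_div_div_cancel_right₀ hsqrt, mul_comm √(K / N)]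

lemma sk_div_pos_of_mul_sq_lt (hN : 0 < N) (hθ : 0 < θ) (hKθ : K * θ ^ 2 < N * π ^ 2) :
    0 < sk (K / N) θ := by
  refine sk_pos hθ ?_
  rwa [div_mul_eq_mul_div, div_lt_iff₀' hN]

lemma exists_ofReal_le_sigmaE (K : ℝ) (hN : 0 < N) {ε : ℝ} (hε : 0 < ε) (L : ℝ) :
    ∃ c > 0, ∀ θ ∈ Set.Icc ε L, ENNReal.ofReal c ≤ sigmaE K N (ε / θ) θ := by
  rcases le_or_gt (N * π ^ 2) (K * ε ^ 2) with hKε | hKε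
  · have hK : 0 < K := pos_of_mul_pos_left (lt_of_lt_of_le (by positivity) hKε) (sq_nonneg ε)
    refine ⟨1, one_pos, fun θ ⟨hεθ, _⟩ => ?_⟩
    have hKθ : N * π ^ 2 ≤ K * θ ^ 2 := hKε.trans (by gcongr)
    simp [sigmaE, hKθ]
  · obtain ⟨B, hB_pos, hB⟩ := exists_sk_le (K / N) L
    have hsk_ε : 0 < sk (K / N) ε := sk_div_pos_of_mul_sq_lt hN hε hKε
    refine ⟨sk (K / N) ε / B, div_pos hsk_ε hB_pos, fun θ ⟨hεθ, hθL⟩ => ?_⟩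
    have hθ : 0 < θ := hε.trans_le hεθ
    rw [sigmaE]
    split_ifs with hKθ
    · exact le_top
    · have hsk_θ : 0 < sk (K / N) θ := sk_div_pos_of_mul_sq_lt hN hθ (not_le.1 hKθ)
      rw [sigmaR_eq_sk_div_sk hN hθ.ne', div_mul_cancel₀ _ hθ.ne']
      gcongr
      exact hB θ ⟨hθ.le, hθL⟩

end DistortionCoefficient

lemma IsMCPDensity.rpow_mul_le {K N c x y t : ℝ} {I : Set ℝ} {h : ℝ → ℝ}
    (hh : IsMCPDensity K N I h) (hN : 1 ≤ N) (hc : 0 ≤ c) (hx : x ∈ I) (hy : y ∈ I)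
    (ht : t ∈ Set.Icc 0 1) (hxy : t * y + (1 - t) * x ∈ I)
    (hcσ : ENNReal.ofReal c ≤ sigmaE K (N - 1) (1 - t) |y - x|) :
    c ^ (N - 1) * h x ≤ h (t * y + (1 - t) * x) := by
  have hN' : 0 ≤ N - 1 := sub_nonneg.2 hN
  rw [← ENNReal.ofReal_le_ofReal_iff (hh.1 _ hxy)]
  calc ENNReal.ofReal (c ^ (N - 1) * h x)
      = ENNReal.ofReal c ^ (N - 1) * ENNReal.ofReal (h x) := by
        rw [ENNReal.ofReal_mul (rpow_nonneg hc _), ENNReal.ofReal_rpow_of_nonneg hc hN']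
    _ ≤ sigmaE K (N - 1) (1 - t) |y - x| ^ (N - 1) * ENNReal.ofReal (h x) := by gcongr
    _ ≤ ENNReal.ofReal (h (t * y + (1 - t) * x)) := hh.2 x hx y hy t ht

lemma exists_segment_extension (x₀ x₁ : ℝ) {ε : ℝ} (hε : 0 < ε) :
    ∃ y ∈ Metric.closedBall x₀ ε, ∃ t ∈ Set.Icc (0 : ℝ) 1,
      |y - x₁| = |x₁ - x₀| + ε ∧ 1 - t = ε / |y - x₁| ∧ t * y + (1 - t) * x₁ = x₀ := by
  obtain ⟨s, hs, hs_mul⟩ : ∃ s : ℝ, |s| = 1 ∧ x₀ - x₁ = s * |x₁ - x₀| := by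
    rcases le_total x₁ x₀ with hle | hle
    · exact ⟨1, by simp, by rw [abs_of_nonpos (sub_nonpos.2 hle)]; ring⟩
    · exact ⟨-1, by simp, by rw [abs_of_nonneg (sub_nonneg.2 hle)]; ring⟩
  have hθ : 0 < |x₁ - x₀| + ε := by positivity
  have hy : |x₀ + s * ε - x₁| = |x₁ - x₀| + ε := by
    rw [show x₀ + s * ε - x₁ = s * (|x₁ - x₀| + ε) by linear_combination hs_mul,
      abs_mul, hs, one_mul, abs_of_pos hθ]
  refine ⟨x₀ + s * ε, ?_, |x₁ - x₀| / (|x₁ - x₀| + ε), ⟨by positivity, ?_⟩, hy, ?_, ?_⟩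
  · simp [hs, abs_of_pos hε]
  · exact div_le_one_of_le₀ (le_add_of_nonneg_right hε.le) hθ.le
  · rw [hy, one_sub_div hθ.ne', add_sub_cancel_left]
  · field_simp
    linear_combination (-ε) * hs_mul

theorem mcp_density_uniform_ratio_bound_general (K N : ℝ) (hN : 1 < N) (ε : ℝ) (hε : 0 < ε)
    (L : ℝ) :
    ∃ C > 0, ∀ (I : Set ℝ) (h : ℝ → ℝ), IsMCPDensity K N I h →
      ∀ x₀, Metric.closedBall x₀ ε ⊆ I → ∀ x₁ ∈ I, |x₁ - x₀| ≤ L → h x₁ ≤ C * h x₀ := by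
  obtain ⟨c, hc, hcσ⟩ := exists_ofReal_le_sigmaE K (sub_pos.2 hN) hε (L + ε)
  have hc_rpow : 0 < c ^ (N - 1) := rpow_pos_of_pos hc _
  refine ⟨(c ^ (N - 1))⁻¹, inv_pos.2 hc_rpow, fun I h hh x₀ hball x₁ hx₁ hdist => ?_⟩
  obtain ⟨y, hy, t, ht, hyx₁, hone_sub, hcomb⟩ := exists_segment_extension x₀ x₁ hε
  have hθ : |y - x₁| ∈ Set.Icc ε (L + ε) := by
    rw [hyx₁]
    exact ⟨le_add_of_nonneg_left (abs_nonneg _), by gcongr⟩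
  have hx₀ : t * y + (1 - t) * x₁ ∈ I := hcomb ▸ hball (Metric.mem_closedBall_self hε.le)
  have hcontract : c ^ (N - 1) * h x₁ ≤ h (t * y + (1 - t) * x₁) :=
    hh.rpow_mul_le hN.le hc.le hx₁ (hball hy) ht hx₀ (hone_sub ▸ hcσ _ hθ)
  rw [hcomb] at hcontract
  exact (le_inv_mul_iff₀ hc_rpow).2 hcontract

theorem mcp_density_uniform_ratio_bound (K N : ℝ) (hN : 1 < N) (ε : ℝ) (hε : 0 < ε) :
    ∃ C > (0:ℝ), ∀ a b : ℝ, 2 * ε ≤ b - a → b - a ≤ 1 / ε →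
      (0 < K → b - a ≤ Real.pi * Real.sqrt ((N - 1) / K)) →
      ∀ h : ℝ → ℝ, IsMCPDensity K N (Set.Ioo a b) h →
      ∀ x₀ ∈ Set.Icc (a + ε) (b - ε), ∀ x₁ ∈ Set.Icc (a + ε) (b - ε),
        h x₁ ≤ C * h x₀ := by
  obtain ⟨C, hC, hbound⟩ :=
    mcp_density_uniform_ratio_bound_general K N hN (ε / 2) (half_pos hε) (1 / ε)
  refine ⟨C, hC, fun a b _ hab _ h hh x₀ ⟨hax₀, hx₀b⟩ x₁ ⟨hax₁, hx₁b⟩ => ?_⟩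
  have hball : Metric.closedBall x₀ (ε / 2) ⊆ Set.Ioo a b := by
    rw [Real.closedBall_eq_Icc]
    exact Set.Icc_subset_Ioo (by linarith) (by linarith)
  exact hbound _ h hh x₀ hball x₁ ⟨by linarith, by linarith⟩ (abs_le.2 ⟨by linarith, by linarith⟩)
end

section
/- For every K ∈ ℝ, N ∈ (1,∞) and R > 0 there exists a constant C = C(K,N,R) > 0 with the following property: for every finite interval (a,b) with 0 < b − a ≤ R and every MCP(K,N) density h on (a,b) with ∫_a^b h(x) dx = 1, the almost-everywhere defined derivative h′ of h (which exists a.e. since h is locally Lipschitz) satisfies ∫_a^b |h′(x)| dx ≤ C/(b−a). -/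
open Real MeasureTheory ENNReal

/-!
Every distortion coefficient satisfies `σ^{(s)}(θ) ≥ s · exp (-(1 - s) θ √(|K| / (N - 1)))`, and
`s ≥ exp (1 - 1 / s)`. Hence an MCP density can decrease at most exponentially, at rate
`c = O(1 / d)`, when moving towards a point that stays at distance at least `d` ahead: on the part
of the interval at distance more than `d` from its right end, `exp (c x) h(x)` is nondecreasing.
With `d` a quarter of the length and `m` the midpoint, three consequences follow.
* On the left half `|h'| ≤ exp (-c x) (exp (c x) h)' + c h` almost everywhere, so the integral of
  `|h'|` there is at most a constant times `h m` plus `c ∫ h`.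
* By reflection the same holds on the right half.
* On `(m, m + d)` the values of `h` are at least a constant times `h m`, so `h m = O(d⁻¹ ∫ h)`.
-/

section DistortionCoefficient

variable {K N s z θ : ℝ}

theorem mul_sin_le_sin_mul (hs₀ : 0 ≤ s) (hs₁ : s ≤ 1) (hz₀ : 0 ≤ z) (hzπ : z ≤ π) :
    s * sin z ≤ sin (s * z) := by
  simpa using strictConcaveOn_sin_Icc.concaveOn.2 (x := z) (y := 0) ⟨hz₀, hzπ⟩
    ⟨le_rfl, pi_pos.le⟩ hs₀ (sub_nonneg.2 hs₁) (by ring)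

-- The function `exp (-z) * sinh z = (1 - exp (-2 * z)) / 2` is concave and vanishes at `0`.
theorem mul_exp_mul_sinh_le_sinh_mul (hs₀ : 0 ≤ s) (hs₁ : s ≤ 1) :
    s * exp (-((1 - s) * z)) * sinh z ≤ sinh (s * z) := by
  have exp_neg_mul_sinh (w : ℝ) : exp (-w) * sinh w = (1 - exp (-2 * w)) / 2 := by
    rw [sinh_eq, mul_div_assoc', mul_sub, ← exp_add, ← exp_add]
    ring_nf
    simp
  have exp_convex : exp (-2 * (s * z)) ≤ s * exp (-2 * z) + (1 - s) := by
    have := convexOn_exp.2 (Set.mem_univ (-2 * z)) (Set.mem_univ 0) hs₀ (sub_nonneg.2 hs₁)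
      (by ring)
    simpa [mul_left_comm] using this
  calc s * exp (-((1 - s) * z)) * sinh z
      = exp (s * z) * (s * (exp (-z) * sinh z)) := by
        rw [show -((1 - s) * z) = s * z + -z by ring, exp_add]; ring
    _ ≤ exp (s * z) * (exp (-(s * z)) * sinh (s * z)) := by
        refine mul_le_mul_of_nonneg_left ?_ (exp_pos _).le
        rw [exp_neg_mul_sinh, exp_neg_mul_sinh]
        linarith
    _ = sinh (s * z) := by rw [← mul_assoc, ← exp_add]; simp

theorem mul_exp_le_sigmaR (hN : 0 < N) (hs₀ : 0 ≤ s) (hs₁ : s ≤ 1) (hθ : 0 ≤ θ)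
    (hfin : K * θ ^ 2 < N * π ^ 2) :
    s * exp (-((1 - s) * (θ * √(|K| / N)))) ≤ sigmaR K N s θ := by
  have le_self : s * exp (-((1 - s) * (θ * √(|K| / N)))) ≤ s :=
    mul_le_of_le_one_right hs₀ <| exp_le_one_iff.2 <| neg_nonpos.2 <|
      mul_nonneg (sub_nonneg.2 hs₁) (by positivity)
  unfold sigmaR
  split_ifs with hpos hzero
  · have hK : 0 < K := pos_of_mul_pos_left hpos (sq_nonneg θ)
    have hθ' : 0 < θ := hθ.lt_of_ne' (by rintro rfl; simp at hpos)
    have hlt : θ * √(K / N) < π := by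
      refine lt_of_pow_lt_pow_left₀ 2 pi_pos.le ?_
      rw [mul_pow, sq_sqrt (by positivity), ← mul_div_assoc, div_lt_iff₀ hN]
      linarith
    rw [le_div_iff₀ (sin_pos_of_pos_of_lt_pi (by positivity) hlt), mul_assoc s θ]
    calc _ ≤ s * sin (θ * √(K / N)) :=
          mul_le_mul_of_nonneg_right le_self
            (sin_nonneg_of_nonneg_of_le_pi (by positivity) hlt.le)
      _ ≤ _ := mul_sin_le_sin_mul hs₀ hs₁ (by positivity) hlt.le
  · exact le_self
  · obtain ⟨hne, -⟩ := not_or.1 hzero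
    have hK : K < 0 := neg_of_mul_neg_left ((not_lt.1 hpos).lt_of_ne hne) (sq_nonneg θ)
    have hθ' : 0 < θ := hθ.lt_of_ne' (by rintro rfl; simp at hne)
    have hz : 0 < θ * √(-K / N) := mul_pos hθ' (sqrt_pos.2 (div_pos (neg_pos.2 hK) hN))
    rw [abs_of_neg hK, le_div_iff₀ (sinh_pos_iff.2 hz), mul_assoc s θ]
    exact mul_exp_mul_sinh_le_sinh_mul hs₀ hs₁

theorem ofReal_mul_exp_le_sigmaE (hN : 0 < N) (hs₀ : 0 ≤ s) (hs₁ : s ≤ 1) (hθ : 0 ≤ θ) :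
    ENNReal.ofReal (s * exp (-((1 - s) * (θ * √(|K| / N))))) ≤ sigmaE K N s θ := by
  unfold sigmaE
  split_ifs with hinf
  · exact le_top
  · exact ENNReal.ofReal_le_ofReal (mul_exp_le_sigmaR hN hs₀ hs₁ hθ (not_le.1 hinf))

end DistortionCoefficient

/-- An upper bound for the exponential rate at which an `MCP(K,N)` density can decrease while moving
towards a point of the interval that stays at distance at least `d` ahead. -/
noncomputable def mcpRate (K N d : ℝ) : ℝ :=
  (N - 1) * (√(|K| / (N - 1)) + d⁻¹)

section MCPRate

variable {K N d R : ℝ}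

theorem mcpRate_nonneg (hN : 1 < N) (hd : 0 ≤ d) : 0 ≤ mcpRate K N d :=
  mul_nonneg (sub_nonneg.2 hN.le) (by positivity)

theorem mcpRate_mul_self_le (hN : 1 < N) (hd : 0 < d) (hdR : d ≤ R) :
    mcpRate K N d * d ≤ (N - 1) * (√(|K| / (N - 1)) * R + 1) := by
  rw [mcpRate, mul_assoc, add_mul, inv_mul_cancel₀ hd.ne']
  have : 0 ≤ N - 1 := sub_nonneg.2 hN.le
  gcongr

end MCPRate

namespace IsMCPDensity

open Set

variable {K N a b d x y z : ℝ} {I : Set ℝ} {h : ℝ → ℝ}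

theorem comp_neg (hh : IsMCPDensity K N I h) :
    IsMCPDensity K N (Neg.neg ⁻¹' I) fun x => h (-x) := by
  refine ⟨fun x hx => hh.1 _ hx, fun x₀ hx₀ x₁ hx₁ t ht => ?_⟩
  have hmcp := hh.2 (-x₀) hx₀ (-x₁) hx₁ t ht
  rwa [← neg_sub', abs_neg, mul_neg, mul_neg, ← neg_add] at hmcp

theorem rpow_mul_le_s9 (hh : IsMCPDensity K N I h) (hN : 1 < N) (hx : x ∈ I) (hy : y ∈ I)
    (hz : z ∈ I) (hxy : x ≤ y) (hyz : y < z) :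
    ((z - y) / (z - x) * exp (-((y - x) * √(|K| / (N - 1))))) ^ (N - 1) * h x ≤ h y := by
  have hzx : 0 < z - x := sub_pos.2 (hxy.trans_lt hyz)
  have hs₀ : 0 ≤ (z - y) / (z - x) := div_nonneg (sub_nonneg.2 hyz.le) hzx.le
  have hs₁ : (z - y) / (z - x) ≤ 1 := (div_le_one hzx).2 (by linarith)
  have hN' : 0 < N - 1 := sub_pos.2 hN
  have hmcp := hh.2 x hx z hz (1 - (z - y) / (z - x)) ⟨sub_nonneg.2 hs₁, sub_le_self _ hs₀⟩
  have hpoint : (1 - (z - y) / (z - x)) * z + (z - y) / (z - x) * x = y := by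
    field_simp; ring
  rw [_root_.sub_sub_cancel, hpoint, abs_of_pos hzx] at hmcp
  have hσ := ofReal_mul_exp_le_sigmaE (K := K) hN' hs₀ hs₁ hzx.le
  have hexponent : (1 - (z - y) / (z - x)) * ((z - x) * √(|K| / (N - 1)))
      = (y - x) * √(|K| / (N - 1)) := by field_simp; ring
  rw [hexponent] at hσ
  rw [← ENNReal.ofReal_le_ofReal_iff (hh.1 y hy), ENNReal.ofReal_mul (by positivity),
    ← ENNReal.ofReal_rpow_of_nonneg (by positivity) hN'.le]
  exact le_trans (by gcongr) hmcp

theorem exp_mul_le (hh : IsMCPDensity K N I h) (hN : 1 < N) (hd : 0 < d) (hx : x ∈ I)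
    (hy : y ∈ I) (hyd : y + d ∈ I) (hxy : x ≤ y) :
    exp (-(mcpRate K N d * (y - x))) * h x ≤ h y := by
  have hs : 0 < d / (y + d - x) := div_pos hd (by linarith)
  have exp_le_ratio : exp (-((y - x) * d⁻¹)) ≤ d / (y + d - x) := by
    have hlog := one_sub_inv_le_log_of_pos hs
    rw [le_log_iff_exp_le hs] at hlog
    convert hlog using 2
    field_simp
    ring
  calc exp (-(mcpRate K N d * (y - x))) * h x
      = (exp (-((y - x) * d⁻¹)) * exp (-((y - x) * √(|K| / (N - 1))))) ^ (N - 1) * h x := by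
        rw [← exp_add, ← exp_mul, mcpRate]; ring_nf
    _ ≤ (d / (y + d - x) * exp (-((y - x) * √(|K| / (N - 1))))) ^ (N - 1) * h x := by
        have := hh.1 x hx
        have := sub_nonneg.2 hN.le
        gcongr
    _ ≤ h y := by
        have := hh.rpow_mul_le_s9 hN hx hy hyd hxy (lt_add_of_pos_right y hd)
        rwa [add_sub_cancel_left] at this

theorem monotoneOn_exp_mul (hh : IsMCPDensity K N (Ioo a b) h) (hN : 1 < N) (hd : 0 < d) :
    MonotoneOn (fun x => exp (mcpRate K N d * x) * h x) (Ioo a (b - d)) := by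
  rintro x ⟨hax, hxb⟩ y ⟨hay, hyb⟩ hxy
  have hle := hh.exp_mul_le hN hd (x := x) (y := y) ⟨hax, by linarith⟩ ⟨hay, by linarith⟩
    ⟨by linarith, by linarith⟩ hxy
  calc exp (mcpRate K N d * x) * h x
      = exp (mcpRate K N d * y) * (exp (-(mcpRate K N d * (y - x))) * h x) := by
        rw [← mul_assoc, ← exp_add]; ring_nf
    _ ≤ exp (mcpRate K N d * y) * h y := by gcongr

end IsMCPDensity

section MonotoneExpMul

open Set

variable {a m c d x : ℝ} {h : ℝ → ℝ}

theorem abs_deriv_le_of_deriv_exp_mul_nonneg (hc : 0 ≤ c)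
    (hdiff : DifferentiableAt ℝ (fun y => exp (c * y) * h y) x)
    (hderiv : 0 ≤ deriv (fun y => exp (c * y) * h y) x) :
    |deriv h x| ≤ exp (-(c * x)) * deriv (fun y => exp (c * y) * h y) x + c * |h x| := by
  have h_eq : h = fun y => exp (-(c * y)) * (exp (c * y) * h y) := by
    funext y
    rw [← mul_assoc, ← exp_add, neg_add_cancel, exp_zero, one_mul]
  have hexp : HasDerivAt (fun y => exp (-(c * y))) (exp (-(c * x)) * -(c * 1)) x :=
    ((hasDerivAt_id x).const_mul c).neg.exp
  have deriv_h : deriv h x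
      = exp (-(c * x)) * deriv (fun y => exp (c * y) * h y) x - c * h x := by
    conv_lhs => rw [h_eq]
    rw [(hexp.fun_mul hdiff.hasDerivAt).deriv]
    linear_combination c * congrFun h_eq x
  calc |deriv h x|
      ≤ |exp (-(c * x)) * deriv (fun y => exp (c * y) * h y) x| + |c * h x| := by
        rw [deriv_h]; exact abs_sub _ _
    _ = _ := by rw [abs_of_nonneg (by positivity), abs_mul, abs_of_nonneg hc]

theorem ae_abs_deriv_le_of_monotoneOn_exp_mul (hc : 0 ≤ c)
    (hmono : MonotoneOn (fun x => exp (c * x) * h x) (Icc a m)) :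
    ∀ᵐ x ∂volume.restrict (Icc a m),
      |deriv h x| ≤ exp (-(c * a)) * deriv (fun y => exp (c * y) * h y) x + c * |h x| := by
  rw [← Measure.restrict_congr_set (Ioo_ae_eq_Icc (μ := volume))]
  have hmono' := hmono.mono Ioo_subset_Icc_self
  filter_upwards [hmono'.ae_differentiableWithinAt measurableSet_Ioo,
    ae_restrict_mem measurableSet_Ioo] with x hdiff hx
  have hnhds : Ioo a m ∈ nhds x := isOpen_Ioo.mem_nhds hx
  have hderiv : 0 ≤ deriv (fun y => exp (c * y) * h y) x := by
    rw [← derivWithin_of_mem_nhds hnhds]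
    exact hmono'.derivWithin_nonneg
  refine (abs_deriv_le_of_deriv_exp_mul_nonneg hc (hdiff.differentiableAt hnhds) hderiv).trans ?_
  gcongr
  exact hx.1.le

theorem intervalIntegrable_of_monotoneOn_exp_mul (ham : a ≤ m)
    (hmono : MonotoneOn (fun x => exp (c * x) * h x) (Icc a m)) :
    IntervalIntegrable h volume a m := by
  rw [← uIcc_of_le ham] at hmono
  have := hmono.intervalIntegrable.continuousOn_mul (g := fun x => exp (-(c * x)))
    (μ := volume) (by fun_prop)
  simpa [← mul_assoc, ← exp_add] using this

theorem integral_abs_deriv_le_of_monotoneOn_exp_mul_Icc (hc : 0 ≤ c) (ham : a ≤ m)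
    (hmono : MonotoneOn (fun x => exp (c * x) * h x) (Icc a m)) :
    IntervalIntegrable (deriv h) volume a m ∧
      ∫ x in a..m, |deriv h x| ≤ exp (c * (m - a)) * h m - h a + c * ∫ x in a..m, |h x| := by
  set g : ℝ → ℝ := fun x => exp (c * x) * h x with hg
  have hmono' : MonotoneOn g (uIcc a m) := by rwa [uIcc_of_le ham]
  have hh_int := (intervalIntegrable_of_monotoneOn_exp_mul ham hmono).abs.const_mul c
  have hg_int := hmono'.intervalIntegrable_deriv.const_mul (exp (-(c * a)))
  have hae := ae_abs_deriv_le_of_monotoneOn_exp_mul hc hmono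
  have hderiv_int : IntervalIntegrable (deriv h) volume a m := by
    refine (hg_int.add hh_int).mono_fun' (measurable_deriv h).aestronglyMeasurable ?_
    rw [uIoc_of_le ham]
    exact ae_restrict_of_ae_restrict_of_subset Ioc_subset_Icc_self hae
  have hderiv_le : ∫ x in a..m, deriv g x ≤ g m - g a := by
    have hmem := hmono'.intervalIntegral_deriv_mem_uIcc
    rw [uIcc_of_le (sub_nonneg.2 (hmono (left_mem_Icc.2 ham) (right_mem_Icc.2 ham) ham))] at hmem
    exact hmem.2
  refine ⟨hderiv_int, ?_⟩
  calc ∫ x in a..m, |deriv h x|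
      ≤ ∫ x in a..m, (exp (-(c * a)) * deriv g x + c * |h x|) :=
        intervalIntegral.integral_mono_ae_restrict ham hderiv_int.abs (hg_int.add hh_int) hae
    _ = exp (-(c * a)) * (∫ x in a..m, deriv g x) + c * ∫ x in a..m, |h x| := by
        rw [intervalIntegral.integral_add hg_int hh_int, intervalIntegral.integral_const_mul,
          intervalIntegral.integral_const_mul]
    _ ≤ exp (-(c * a)) * (g m - g a) + c * ∫ x in a..m, |h x| := by gcongr
    _ = _ := by
        simp only [hg, mul_sub, ← mul_assoc, ← exp_add]
        ring_nf
        simp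

theorem integral_abs_deriv_le_of_monotoneOn_exp_mul (hc : 0 ≤ c) (ham : a < m)
    (hnonneg : ∀ x ∈ Ioc a m, 0 ≤ h x)
    (hmono : MonotoneOn (fun x => exp (c * x) * h x) (Ioc a m)) :
    IntervalIntegrable h volume a m ∧ IntervalIntegrable (deriv h) volume a m ∧
      ∫ x in a..m, |deriv h x| ≤ exp (c * (m - a)) * h m + c * ∫ x in a..m, h x := by
  -- Monotonicity extends from `Ioc a m` to `Icc a m` once the value at `a` is set to `0`.
  set f : ℝ → ℝ := (Ioi a).indicator h
  have hfa : f a = 0 := indicator_of_notMem self_notMem_Ioi h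
  have hfx : ∀ x, a < x → f x = h x := fun x hx => indicator_of_mem hx h
  have hmono_f : MonotoneOn (fun x => exp (c * x) * f x) (Icc a m) := by
    rintro x ⟨hax, hxm⟩ y ⟨-, hym⟩ hxy
    rcases hax.eq_or_lt with rfl | hax
    · simp only [hfa, mul_zero]
      exact mul_nonneg (exp_pos _).le (indicator_apply_nonneg fun hy => hnonneg y ⟨hy, hym⟩)
    · simp only [hfx x hax, hfx y (hax.trans_le hxy)]
      exact hmono ⟨hax, hxm⟩ ⟨hax.trans_le hxy, hym⟩ hxy
  have hderiv : EqOn (deriv f) (deriv h) (uIoc a m) := fun x hx => by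
    rw [uIoc_of_le ham.le] at hx
    exact (eqOn_indicator.eventuallyEq_of_mem (Ioi_mem_nhds hx.1)).deriv_eq
  have habs : EqOn (fun x => |f x|) h (uIoc a m) := fun x hx => by
    rw [uIoc_of_le ham.le] at hx
    simp only [hfx x hx.1, abs_of_nonneg (hnonneg x hx)]
  obtain ⟨hderiv_int, hbound⟩ :=
    integral_abs_deriv_le_of_monotoneOn_exp_mul_Icc hc ham.le hmono_f
  refine ⟨(intervalIntegrable_congr habs).1
    (intervalIntegrable_of_monotoneOn_exp_mul ham.le hmono_f).abs,
    (intervalIntegrable_congr hderiv).1 hderiv_int, ?_⟩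
  rwa [hfa, hfx m ham, sub_zero,
    intervalIntegral.integral_congr_ae (.of_forall fun x hx => congrArg abs (hderiv hx)),
    intervalIntegral.integral_congr_ae (.of_forall fun x hx => habs hx)] at hbound

theorem mul_le_exp_mul_integral_of_monotoneOn_exp_mul (hc : 0 ≤ c) (hd : 0 ≤ d)
    (hnonneg : ∀ x ∈ Ico m (m + d), 0 ≤ h x)
    (hmono : MonotoneOn (fun x => exp (c * x) * h x) (Ico m (m + d)))
    (hint : IntervalIntegrable h volume m (m + d)) :
    d * h m ≤ exp (c * d) * ∫ x in m..(m + d), h x := by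
  have h_le : ∀ x ∈ Ioo m (m + d), h m ≤ exp (c * d) * h x := by
    rintro x ⟨hmx, hxd⟩
    have hx := hnonneg x ⟨hmx.le, hxd⟩
    have hle := hmono ⟨le_rfl, hmx.trans hxd⟩ ⟨hmx.le, hxd⟩ hmx.le
    calc h m = exp (-(c * m)) * (exp (c * m) * h m) := by
          rw [← mul_assoc, ← exp_add, neg_add_cancel, exp_zero, one_mul]
      _ ≤ exp (-(c * m)) * (exp (c * x) * h x) := mul_le_mul_of_nonneg_left hle (exp_pos _).le
      _ = exp (c * (x - m)) * h x := by rw [← mul_assoc, ← exp_add]; ring_nf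
      _ ≤ exp (c * d) * h x := by gcongr; linarith
  calc d * h m = ∫ _ in m..(m + d), h m := by simp
    _ ≤ ∫ x in m..(m + d), exp (c * d) * h x :=
        intervalIntegral.integral_mono_on_of_le_Ioo (le_add_of_nonneg_right hd) (by simp)
          (hint.const_mul _) h_le
    _ = _ := intervalIntegral.integral_const_mul _ _

end MonotoneExpMul

namespace IsMCPDensity

open Set

variable {K N a b m d : ℝ} {h : ℝ → ℝ}

theorem integral_abs_deriv_left_le (hh : IsMCPDensity K N (Ioo a b) h) (hN : 1 < N) (hd : 0 < d)
    (ham : a < m) (hmb : m < b - d) :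
    IntervalIntegrable h volume a m ∧ IntervalIntegrable (deriv h) volume a m ∧
      ∫ x in a..m, |deriv h x| ≤
        exp (mcpRate K N d * (m - a)) * h m + mcpRate K N d * ∫ x in a..m, h x :=
  integral_abs_deriv_le_of_monotoneOn_exp_mul (mcpRate_nonneg hN hd.le) ham
    (fun x hx => hh.1 x ⟨hx.1, by linarith [hx.2]⟩)
    ((hh.monotoneOn_exp_mul hN hd).mono (Ioc_subset_Ioo_right hmb))

theorem integral_abs_deriv_right_le (hh : IsMCPDensity K N (Ioo a b) h) (hN : 1 < N) (hd : 0 < d)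
    (ham : a + d < m) (hmb : m < b) :
    IntervalIntegrable h volume m b ∧ IntervalIntegrable (deriv h) volume m b ∧
      ∫ x in m..b, |deriv h x| ≤
        exp (mcpRate K N d * (b - m)) * h m + mcpRate K N d * ∫ x in m..b, h x := by
  have hreflected := hh.comp_neg
  rw [neg_preimage, neg_Ioo] at hreflected
  obtain ⟨hint, hderiv_int, hbound⟩ := hreflected.integral_abs_deriv_left_le hN hd
    (neg_lt_neg hmb) (by linarith : -m < -a - d)
  have hderiv : deriv (fun x => h (-x)) = fun x => -deriv h (-x) :=
    funext fun x => deriv_comp_neg h x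
  rw [hderiv] at hderiv_int
  simp only [hderiv, abs_neg, neg_neg, neg_sub_neg,
    intervalIntegral.integral_comp_neg (fun x => |deriv h x|),
    intervalIntegral.integral_comp_neg h] at hbound
  refine ⟨(IntervalIntegrable.iff_comp_neg (by simp)).2 hint.symm,
    (IntervalIntegrable.iff_comp_neg (by simp)).2 ?_, hbound⟩
  simpa [Pi.neg_def] using hderiv_int.neg.symm

theorem mul_apply_le_exp_mul_integral (hh : IsMCPDensity K N (Ioo a b) h) (hN : 1 < N)
    (hd : 0 < d) (ham : a < m) (hmb : m + d ≤ b - d) (hint : IntervalIntegrable h volume a b) :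
    d * h m ≤ exp (mcpRate K N d * d) * ∫ x in a..b, h x := by
  have hint_right : IntervalIntegrable h volume m (m + d) := by
    refine hint.mono_set (uIcc_subset_uIcc ?_ ?_) <;>
      exact mem_uIcc_of_le (by linarith) (by linarith)
  have hlocal := mul_le_exp_mul_integral_of_monotoneOn_exp_mul (mcpRate_nonneg hN hd.le) hd.le
    (fun x hx => hh.1 x ⟨ham.trans_le hx.1, by linarith [hx.2]⟩)
    ((hh.monotoneOn_exp_mul hN hd).mono fun x hx => ⟨ham.trans_le hx.1, hx.2.trans_le hmb⟩)
    hint_right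
  refine hlocal.trans ?_
  gcongr
  refine intervalIntegral.integral_mono_interval ham.le (by linarith) (by linarith) ?_ hint
  rw [← Measure.restrict_congr_set Ioo_ae_eq_Ioc]
  exact (ae_restrict_mem measurableSet_Ioo).mono hh.1

theorem integral_abs_deriv_le (hh : IsMCPDensity K N (Ioo (m - 2 * d) (m + 2 * d)) h)
    (hN : 1 < N) (hd : 0 < d) :
    IntervalIntegrable h volume (m - 2 * d) (m + 2 * d) ∧
      IntervalIntegrable (deriv h) volume (m - 2 * d) (m + 2 * d) ∧
      ∫ x in (m - 2 * d)..(m + 2 * d), |deriv h x| ≤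
        (2 * exp (3 * (mcpRate K N d * d)) + mcpRate K N d * d) / d *
          ∫ x in (m - 2 * d)..(m + 2 * d), h x := by
  set c := mcpRate K N d
  obtain ⟨hint_left, hderiv_left, hbound_left⟩ :=
    hh.integral_abs_deriv_left_le hN hd (m := m) (by linarith) (by linarith)
  obtain ⟨hint_right, hderiv_right, hbound_right⟩ :=
    hh.integral_abs_deriv_right_le hN hd (m := m) (by linarith) (by linarith)
  have hint := hint_left.trans hint_right
  have hmid : h m ≤ exp (c * d) / d * ∫ x in (m - 2 * d)..(m + 2 * d), h x := by
    rw [div_mul_eq_mul_div, le_div_iff₀' hd]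
    exact hh.mul_apply_le_exp_mul_integral hN hd (by linarith) (by linarith) hint
  refine ⟨hint, hderiv_left.trans hderiv_right, ?_⟩
  calc ∫ x in (m - 2 * d)..(m + 2 * d), |deriv h x|
      = (∫ x in (m - 2 * d)..m, |deriv h x|) + ∫ x in m..(m + 2 * d), |deriv h x| :=
        (intervalIntegral.integral_add_adjacent_intervals hderiv_left.abs hderiv_right.abs).symm
    _ ≤ 2 * exp (2 * (c * d)) * h m + c * ∫ x in (m - 2 * d)..(m + 2 * d), h x := by
        rw [← intervalIntegral.integral_add_adjacent_intervals hint_left hint_right]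
        rw [_root_.sub_sub_cancel, mul_left_comm] at hbound_left
        rw [add_sub_cancel_left, mul_left_comm] at hbound_right
        linarith
    _ ≤ 2 * exp (2 * (c * d)) * (exp (c * d) / d * ∫ x in (m - 2 * d)..(m + 2 * d), h x)
          + c * ∫ x in (m - 2 * d)..(m + 2 * d), h x := by gcongr
    _ = _ := by
        rw [show 3 * (c * d) = 2 * (c * d) + c * d by ring, exp_add]
        field_simp

end IsMCPDensity

theorem mcp_density_deriv_L1_bound_general (K N : ℝ) (hN : 1 < N) (R : ℝ) (hR : 0 < R) :
    ∃ C > (0 : ℝ), ∀ a b : ℝ, 0 < b - a → b - a ≤ R →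
      ∀ h : ℝ → ℝ, IsMCPDensity K N (Set.Ioo a b) h →
      IntegrableOn h (Set.Ioo a b) ∧ IntegrableOn (deriv h) (Set.Ioo a b) ∧
        ∫ x in Set.Ioo a b, |deriv h x| ≤ C / (b - a) * ∫ x in Set.Ioo a b, h x := by
  set q := (N - 1) * (√(|K| / (N - 1)) * R + 1)
  have : 0 < q := mul_pos (sub_pos.2 hN) (by positivity)
  refine ⟨4 * (2 * exp (3 * q) + q), by positivity, fun a b hab habR h hh => ?_⟩
  obtain ⟨m, d, rfl, rfl⟩ : ∃ m d : ℝ, a = m - 2 * d ∧ b = m + 2 * d :=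
    ⟨(a + b) / 2, (b - a) / 4, by ring, by ring⟩
  have hd : 0 < d := by linarith
  obtain ⟨hint, hderiv_int, hbound⟩ := hh.integral_abs_deriv_le hN hd
  have hle : m - 2 * d ≤ m + 2 * d := by linarith
  rw [intervalIntegrable_iff_integrableOn_Ioo_of_le hle] at hint hderiv_int
  rw [intervalIntegral.integral_of_le hle, intervalIntegral.integral_of_le hle,
    integral_Ioc_eq_integral_Ioo, integral_Ioc_eq_integral_Ioo] at hbound
  refine ⟨hint, hderiv_int, hbound.trans ?_⟩
  have hmass : 0 ≤ ∫ x in Set.Ioo (m - 2 * d) (m + 2 * d), h x :=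
    setIntegral_nonneg measurableSet_Ioo hh.1
  have hcd : mcpRate K N d * d ≤ q := mcpRate_mul_self_le hN hd (by linarith)
  calc _ ≤ (2 * exp (3 * q) + q) / d * ∫ x in Set.Ioo (m - 2 * d) (m + 2 * d), h x := by gcongr
    _ = _ := by rw [show m + 2 * d - (m - 2 * d) = 4 * d by ring, mul_div_mul_left _ _ four_ne_zero]

theorem mcp_density_deriv_L1_bound (K N : ℝ) (hN : 1 < N) (R : ℝ) (hR : 0 < R) :
    ∃ C > (0:ℝ), ∀ a b : ℝ, 0 < b - a → b - a ≤ R →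
      ∀ h : ℝ → ℝ, IsMCPDensity K N (Set.Ioo a b) h →
      (∫ x in Set.Ioo a b, h x) = 1 →
      ∫ x in Set.Ioo a b, |deriv h x| ≤ C / (b - a) := by
  obtain ⟨C, hC, hbound⟩ := mcp_density_deriv_L1_bound_general K N hN R hR
  exact ⟨C, hC, fun a b hab habR h hh hmass => by
    simpa [hmass] using (hbound a b hab habR h hh).2.2⟩
end

section
/- Let K > 0, N ∈ (1,∞), let a < b be real numbers, and let h be an MCP(K,N) density on (a,b) such that h(x₀) > 0 for some x₀ ∈ (a,b). Then h(x) > 0 for every x ∈ (a,b), and b − a ≤ π·√((N−1)/K). -/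
open Real MeasureTheory ENNReal

/-!
An MCP density that is positive at `x₀` stays positive along every segment of `I` issuing from
`x₀`, the far endpoint excepted, because the distortion coefficient `σ^{(1-t)}` is positive for
`t < 1`. A segment from `x₀` to an interior point of `I` can be prolonged inside `I`, so this
reaches the whole interior. As an infinite coefficient is incompatible with positivity, two points
of the interval `I` at one of which `h` is positive satisfy `K * |y - x| ^ 2 < (N - 1) * π ^ 2`.
Contracting `I` towards `x₀` by a factor `t < 1` lands in the set where `h` is positive, and `t → 1`
gives the weak form of this inequality on all of `I`.
-/

open Set Filter Topology AffineMap

section DistortionCoefficient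

variable {K N t θ : ℝ}

theorem mul_sqrt_div_lt_pi (hN : 0 < N) (hθ : K * θ ^ 2 < N * π ^ 2) : θ * √(K / N) < π := by
  rcases le_total K 0 with hK | hK
  · rw [Real.sqrt_eq_zero_of_nonpos (div_nonpos_of_nonpos_of_nonneg hK hN.le), mul_zero]
    exact pi_pos
  · refine lt_of_pow_lt_pow_left₀ 2 pi_pos.le ?_
    rw [mul_pow, Real.sq_sqrt (div_nonneg hK hN.le), mul_div_assoc', div_lt_iff₀ hN]
    linarith

theorem abs_le_pi_mul_sqrt_div (hK : 0 < K) (hθ : K * θ ^ 2 ≤ N * π ^ 2) :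
    |θ| ≤ π * √(N / K) := by
  have sq_le : θ ^ 2 ≤ π ^ 2 * (N / K) := by
    rw [mul_div_assoc', le_div_iff₀ hK]
    linarith
  calc |θ| ≤ √(π ^ 2 * (N / K)) := Real.abs_le_sqrt sq_le
    _ = π * √(N / K) := by rw [Real.sqrt_mul (sq_nonneg π), Real.sqrt_sq pi_pos.le]

theorem sin_mul_div_sin_pos {φ : ℝ} (ht : t ∈ Ioc 0 1) (hφ : φ ∈ Ioo 0 π) :
    0 < sin (t * φ) / sin φ := by
  have mul_lt_pi : t * φ < π := (mul_le_of_le_one_left hφ.1.le ht.2).trans_lt hφ.2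
  exact div_pos (sin_pos_of_pos_of_lt_pi (mul_pos ht.1 hφ.1) mul_lt_pi) (sin_pos_of_mem_Ioo hφ)

theorem sinh_mul_div_sinh_pos {φ : ℝ} (ht : 0 < t) (hφ : 0 < φ) : 0 < sinh (t * φ) / sinh φ :=
  div_pos (sinh_pos_iff.2 (mul_pos ht hφ)) (sinh_pos_iff.2 hφ)

theorem sigmaR_pos (hN : 0 ≤ N) (ht : t ∈ Ioc 0 1) (hθ₀ : 0 ≤ θ)
    (hθ : K * θ ^ 2 < N * π ^ 2) : 0 < sigmaR K N t θ := by
  unfold sigmaR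
  split_ifs with hpos hzero
  · have hN' : 0 < N := pos_of_mul_pos_left (hpos.trans hθ) (sq_nonneg π)
    have hK : 0 < K := pos_of_mul_pos_left hpos (sq_nonneg θ)
    have hθ' : 0 < θ := hθ₀.lt_of_ne' (by rintro rfl; simp at hpos)
    rw [mul_assoc]
    exact sin_mul_div_sin_pos ht
      ⟨mul_pos hθ' (sqrt_pos.2 (div_pos hK hN')), mul_sqrt_div_lt_pi hN' hθ⟩
  · exact ht.1
  · obtain ⟨hKθ, hN₀⟩ := not_or.1 hzero
    have hN' : 0 < N := hN.lt_of_ne' hN₀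
    have hK : 0 < -K := neg_pos.2 <|
      neg_of_mul_neg_left ((not_lt.1 hpos).lt_of_ne hKθ) (sq_nonneg θ)
    have hθ' : 0 < θ := hθ₀.lt_of_ne' (by rintro rfl; simp at hKθ)
    rw [mul_assoc]
    exact sinh_mul_div_sinh_pos ht.1 (mul_pos hθ' (sqrt_pos.2 (div_pos hK hN')))

theorem sigmaE_pos (hN : 0 ≤ N) (ht : t ∈ Ioc 0 1) (hθ : 0 ≤ θ) : 0 < sigmaE K N t θ := by
  unfold sigmaE
  split_ifs with hlarge
  · exact ENNReal.zero_lt_top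
  · exact ENNReal.ofReal_pos.2 (sigmaR_pos hN ht hθ (not_le.1 hlarge))

theorem sigmaE_eq_top_iff : sigmaE K N t θ = ⊤ ↔ N * π ^ 2 ≤ K * θ ^ 2 := by
  simp [sigmaE]

end DistortionCoefficient

namespace IsMCPDensity

variable {K N : ℝ} {I : Set ℝ} {h : ℝ → ℝ} {x₀ x y : ℝ}

theorem mul_sq_lt (hh : IsMCPDensity K N I h) (hN : 1 < N) (hx : x ∈ I) (hy : y ∈ I)
    (hpos : 0 < h x) : K * |y - x| ^ 2 < (N - 1) * π ^ 2 := by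
  by_contra! hfar
  have ineq := hh.2 x hx y hy 0 (left_mem_Icc.2 zero_le_one)
  rw [sigmaE_eq_top_iff.2 hfar, ENNReal.top_rpow_of_pos (sub_pos.2 hN),
    ENNReal.top_mul (ENNReal.ofReal_pos.2 hpos).ne'] at ineq
  exact ENNReal.ofReal_ne_top (top_le_iff.1 ineq)

theorem pos_lineMap (hh : IsMCPDensity K N I h) (hN : 1 ≤ N) (hx : x ∈ I) (hy : y ∈ I)
    (hpos : 0 < h x) {t : ℝ} (ht : t ∈ Ico 0 1) : 0 < h (lineMap x y t) := by
  have coeff_pos : 0 < sigmaE K (N - 1) (1 - t) |y - x| ^ (N - 1) :=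
    ENNReal.rpow_pos_of_nonneg
      (sigmaE_pos (sub_nonneg.2 hN) ⟨sub_pos.2 ht.2, sub_le_self 1 ht.1⟩ (abs_nonneg _))
      (sub_nonneg.2 hN)
  rw [lineMap_apply_ring, add_comm, ← ENNReal.ofReal_pos]
  exact (ENNReal.mul_pos coeff_pos.ne' (ENNReal.ofReal_pos.2 hpos).ne').trans_le
    (hh.2 x hx y hy t (Ico_subset_Icc_self ht))

theorem pos_of_mem_interior (hh : IsMCPDensity K N I h) (hN : 1 ≤ N) (hx₀ : x₀ ∈ I)
    (hpos : 0 < h x₀) (hx : x ∈ interior I) : 0 < h x := by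
  have mem_near_one : ∀ᶠ s in 𝓝[>] (1 : ℝ), lineMap x₀ x s ∈ I := by
    have tendsto_x : Tendsto (lineMap x₀ x : ℝ → ℝ) (𝓝[>] 1) (𝓝 x) :=
      (lineMap_continuous.tendsto' 1 x (lineMap_apply_one x₀ x)).mono_left nhdsWithin_le_nhds
    exact tendsto_x.eventually_mem (mem_interior_iff_mem_nhds.1 hx)
  obtain ⟨s, hsI, hs⟩ := (mem_near_one.and self_mem_nhdsWithin).exists
  have s_pos : 0 < s := zero_lt_one.trans hs
  have lineMap_inv : lineMap x₀ (lineMap x₀ x s) s⁻¹ = x := by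
    rw [lineMap_lineMap_right, inv_mul_cancel₀ s_pos.ne', lineMap_apply_one]
  rw [← lineMap_inv]
  exact hh.pos_lineMap hN hx₀ hsI hpos ⟨(inv_pos.2 s_pos).le, inv_lt_one_of_one_lt₀ hs⟩

theorem mul_sq_le (hh : IsMCPDensity K N I h) (hN : 1 < N) (hI : I.OrdConnected) (hx₀ : x₀ ∈ I)
    (hpos : 0 < h x₀) (hx : x ∈ I) (hy : y ∈ I) : K * (y - x) ^ 2 ≤ (N - 1) * π ^ 2 := by
  have contracted : ∀ t ∈ Ico (0 : ℝ) 1, K * (t * (y - x)) ^ 2 ≤ (N - 1) * π ^ 2 := by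
    intro t ht
    have lineMap_mem {z : ℝ} (hz : z ∈ I) : lineMap x₀ z t ∈ I :=
      hI.convex.lineMap_mem hx₀ hz (Ico_subset_Icc_self ht)
    have lt := hh.mul_sq_lt hN (lineMap_mem hx) (lineMap_mem hy)
      (hh.pos_lineMap hN.le hx₀ hx hpos ht)
    have lineMap_sub : lineMap x₀ y t - lineMap x₀ x t = t * (y - x) := by
      simp only [lineMap_apply_ring]
      ring
    rw [sq_abs, lineMap_sub] at lt
    exact lt.le
  have tendsto_one : Tendsto (fun t : ℝ ↦ K * (t * (y - x)) ^ 2) (𝓝[<] 1)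
      (𝓝 (K * (y - x) ^ 2)) :=
    (Continuous.tendsto' (by fun_prop) 1 _ (by rw [one_mul])).mono_left nhdsWithin_le_nhds
  exact le_of_tendsto tendsto_one (eventually_of_mem (Ico_mem_nhdsLT zero_lt_one) contracted)

theorem ediam_le (hh : IsMCPDensity K N I h) (hK : 0 < K) (hN : 1 < N) (hI : I.OrdConnected)
    (hx₀ : x₀ ∈ I) (hpos : 0 < h x₀) :
    Metric.ediam I ≤ ENNReal.ofReal (π * √((N - 1) / K)) := by
  refine Metric.ediam_le fun x hx y hy ↦ ?_
  rw [edist_dist, Real.dist_eq]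
  exact ENNReal.ofReal_le_ofReal
    (abs_le_pi_mul_sqrt_div hK (hh.mul_sq_le hN hI hx₀ hpos hy hx))

end IsMCPDensity

theorem mcp_density_pos_and_diam_bound_general {K N : ℝ} (hN : 1 < N) {I : Set ℝ}
    (hI : I.OrdConnected) {h : ℝ → ℝ} (hh : IsMCPDensity K N I h) {x₀ : ℝ} (hx₀ : x₀ ∈ I)
    (hpos : 0 < h x₀) :
    (∀ x ∈ interior I, 0 < h x) ∧
      (0 < K → Metric.ediam I ≤ ENNReal.ofReal (π * √((N - 1) / K))) :=
  ⟨fun _ hx ↦ hh.pos_of_mem_interior hN.le hx₀ hpos hx,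
    fun hK ↦ hh.ediam_le hK hN hI hx₀ hpos⟩

theorem mcp_density_pos_and_diam_bound (K N a b : ℝ) (hK : 0 < K) (hN : 1 < N)
    (hab : a < b)
    (h : ℝ → ℝ) (hh : IsMCPDensity K N (Set.Ioo a b) h)
    (x₀ : ℝ) (hx₀ : x₀ ∈ Set.Ioo a b) (hpos : 0 < h x₀) :
    (∀ x ∈ Set.Ioo a b, 0 < h x) ∧
      b - a ≤ Real.pi * Real.sqrt ((N - 1) / K) := by
  obtain ⟨pos, diam⟩ := mcp_density_pos_and_diam_bound_general hN ordConnected_Ioo hh hx₀ hpos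
  rw [interior_Ioo] at pos
  rw [Real.ediam_Ioo, ENNReal.ofReal_le_ofReal_iff (by positivity)] at diam
  exact ⟨pos, diam hK⟩
end
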